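/- Let U be a D×D unitary complex matrix whose spectrum consists of exactly d ≥ 2 distinct eigenvalues e^{iφ_1}, …, e^{iφ_d} with each φ_k ∈ [0, 2π). Then for every ε with 0 < ε ≤ 1/2 there exists a positive integer m_r with m_r ≤ (π / max_{j,k} R(φ_j, φ_k)) · (1/d) · (2⌈π/ε⌉ + 2)^(d−1) such that: (i) for every unit vector ψ ∈ ℂ^D, 1 − |⟨ψ, U^{m_r} ψ⟩|² ≤ ε², and (ii) there exist a unit vector φ ∈ ℂ^D and a positive integer m′ ≤ m_r such that 1 − |⟨φ, U^{m′} φ⟩|² > ε². -/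

import Mathlib

open Matrix Real

/-- Cells of the cyclic staircase through `x`, indexed by the coordinate at which the staircase
is cut; ties between fractional parts are broken by the index. -/
noncomputable def staircaseCell {n : ℕ} (x : Fin n → ℝ) (j i : Fin n) : ℤ :=
  ⌊x i⌋ + if toLex (Int.fract (x j), j) ≤ toLex (Int.fract (x i), i) then 1 else 0

theorem sub_fract_sub_staircaseCell_mem {n : ℕ} (x : Fin n → ℝ) (j i : Fin n) :
    x i - Int.fract (x j) - staircaseCell x j i ∈ Set.Icc (-1 : ℝ) 0 := by
  have h1 := Int.fract_nonneg (x i)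
  have h2 := Int.fract_lt_one (x i)
  have h3 := Int.fract_nonneg (x j)
  have h4 := Int.fract_lt_one (x j)
  have h5 := Int.self_sub_floor (x i)
  unfold staircaseCell
  split_ifs with h
  · have : Int.fract (x j) ≤ Int.fract (x i) := by
      rcases Prod.Lex.toLex_le_toLex.1 h with h | h
      · exact h.le
      · exact h.1.le
    push_cast
    constructor <;> linarith
  · have : Int.fract (x i) ≤ Int.fract (x j) := by
      rcases Prod.Lex.toLex_lt_toLex.1 (not_le.1 h) with h | h
      · exact h.le
      · exact h.1.le
    push_cast
    constructor <;> linarith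

theorem staircaseCell_eq_of_sub_congr {n b : ℕ} (hb : 2 ≤ b) (x : Fin (n + 1) → ℝ)
    {j k : Fin (n + 1)}
    (h : ∀ i, ((staircaseCell x j i - staircaseCell x j 0 : ℤ) : ZMod b) =
      ((staircaseCell x k i - staircaseCell x k 0 : ℤ) : ZMod b)) : j = k := by
  have : Fact (1 < b) := ⟨hb⟩
  have hone : (1 : ZMod b) ≠ 0 := one_ne_zero
  wlog hjk : toLex (Int.fract (x j), j) ≤ toLex (Int.fract (x k), k) generalizing j k
  · exact (this (fun i => (h i).symm) (le_of_not_ge hjk)).symm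
  by_contra hne
  have hlt : ¬ toLex (Int.fract (x k), k) ≤ toLex (Int.fract (x j), j) := fun hkj =>
    hne (congrArg (fun p => (ofLex p).2) (le_antisymm hjk hkj))
  have hj := h j
  have hk := h k
  simp only [staircaseCell, le_refl, hjk, hlt, if_true, if_false] at hj hk
  push_cast at hj hk
  apply hone
  linear_combination hj - hk

/-- Simultaneous approximation up to a common shift: among the multiples of `θ`, a recurrence
modulo `b` with all coordinates within `1` of a common value occurs by time `b ^ n / (n + 1)`. -/
theorem exists_multiple_near_diagonal {n b : ℕ} (hb : 2 ≤ b) (θ : Fin (n + 1) → ℝ) :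
    ∃ m : ℕ, 0 < m ∧ m * (n + 1) ≤ b ^ n ∧
      ∃ (τ : ℝ) (z : Fin (n + 1) → ℤ), ∀ i, |m * θ i - τ - b * z i| ≤ 1 := by
  have : NeZero b := ⟨by omega⟩
  let cell (t : ℕ) := staircaseCell (fun i => (t : ℝ) * θ i)
  let F : Fin (b ^ n / (n + 1) + 1) × Fin (n + 1) → (Fin n → ZMod b) :=
    fun p i => ((cell p.1 p.2 i.succ - cell p.1 p.2 0 : ℤ) : ZMod b)
  obtain ⟨⟨s, j⟩, ⟨t, k⟩, hne, hF⟩ := Fintype.exists_ne_map_eq_of_card_lt F (by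
    simpa [ZMod.card, mul_comm] using Nat.lt_mul_div_succ (b ^ n) n.succ_pos)
  have hcongr : ∀ i, ((cell s j i - cell s j 0 : ℤ) : ZMod b) =
      ((cell t k i - cell t k 0 : ℤ) : ZMod b) := by
    intro i
    refine Fin.cases ?_ (fun i => congrFun hF i) i
    simp
  have hst : s ≠ t := by
    rintro rfl
    exact hne (congrArg _ (staircaseCell_eq_of_sub_congr hb _ hcongr))
  clear hF
  wlog hlt : s < t generalizing s t j k
  · exact this t k s j hne.symm (fun i => (hcongr i).symm) hst.symm
      (lt_of_le_of_ne (not_lt.1 hlt) hst.symm)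
  have hlt' : (s : ℕ) < t := hlt
  choose z hz using fun i => (ZMod.intCast_eq_intCast_iff_dvd_sub _ _ b).1 (hcongr i)
  refine ⟨t - s, by omega, ?_, Int.fract ((t : ℝ) * θ k) - Int.fract ((s : ℝ) * θ j) +
    (cell t k 0 - cell s j 0), z, fun i => ?_⟩
  · calc ((t : ℕ) - s) * (n + 1) ≤ (b ^ n / (n + 1)) * (n + 1) := by
          gcongr; omega
      _ ≤ b ^ n := Nat.div_mul_le_self _ _
  · have h1 := sub_fract_sub_staircaseCell_mem (fun i => ((t : ℕ) : ℝ) * θ i) k i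
    have h2 := sub_fract_sub_staircaseCell_mem (fun i => ((s : ℕ) : ℝ) * θ i) j i
    have h3 : ((cell t k i : ℝ) - cell t k 0) - (cell s j i - cell s j 0) = b * z i := by
      exact_mod_cast hz i
    simp only [cell] at h3 ⊢
    rw [Nat.cast_sub hlt'.le, abs_le]
    obtain ⟨h1l, h1u⟩ := h1
    obtain ⟨h2l, h2u⟩ := h2
    constructor <;> linarith

open scoped Matrix.Norms.L2Operator MatrixOrder ComplexOrder in
/-- A lower bound for the real part of `u * z ^ m` on the spectrum of a unitary matrix passes to
its numerical range. -/
theorem le_re_mul_dotProduct_pow_mulVec {ι : Type*} [Fintype ι] [DecidableEq ι]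
    {U : Matrix ι ι ℂ} (hU : U ∈ Matrix.unitaryGroup ι ℂ) {m : ℕ} {u : ℂ} {c : ℝ}
    (h : ∀ z ∈ spectrum ℂ U, c ≤ (u * z ^ m).re) {ψ : ι → ℂ} (hψ : star ψ ⬝ᵥ ψ = 1) :
    c ≤ (u * (star ψ ⬝ᵥ ((U ^ m) *ᵥ ψ))).re := by
  have hn : IsStarNormal U :=
    ⟨by rw [commute_iff_eq, Matrix.mem_unitaryGroup_iff'.1 hU, Matrix.mem_unitaryGroup_iff.1 hU]⟩
  let f : ℂ → ℂ := fun z => u * z ^ m + star (u * z ^ m) - (2 * c : ℝ)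
  have hf : 0 ≤ cfc f U := cfc_nonneg fun z hz => by
    have h1 := h z hz
    have h2 : f z = ((2 * (u * z ^ m).re - 2 * c : ℝ) : ℂ) := by
      simp only [f, Complex.star_def, Complex.add_conj]
      push_cast
      ring
    rw [h2]
    exact_mod_cast (by linarith : (0 : ℝ) ≤ 2 * (u * z ^ m).re - 2 * c)
  have hfe : cfc f U = u • U ^ m + star (u • U ^ m) - ((2 * c : ℝ) : ℂ) • 1 := by
    have h1 : cfc (fun z : ℂ => u * z ^ m) U = u • U ^ m := by
      rw [cfc_const_mul u (fun z : ℂ => z ^ m) U, cfc_pow_id U m]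
    rw [cfc_sub (fun z : ℂ => u * z ^ m + star (u * z ^ m)) (fun _ => ((2 * c : ℝ) : ℂ)) U,
      cfc_add U (fun z : ℂ => u * z ^ m) (fun z : ℂ => star (u * z ^ m)), cfc_star, h1,
      cfc_const _ U, Algebra.algebraMap_eq_smul_one]
  have hpos := (Matrix.nonneg_iff_posSemidef.1 hf).dotProduct_mulVec_nonneg ψ
  have hstar : star ψ ⬝ᵥ ((star (u • U ^ m)) *ᵥ ψ) =
      star (star ψ ⬝ᵥ ((u • U ^ m) *ᵥ ψ)) := by
    rw [Matrix.dotProduct_mulVec, Matrix.star_eq_conjTranspose, ← Matrix.star_mulVec,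
      Matrix.star_dotProduct]
  rw [hfe, Matrix.sub_mulVec, Matrix.add_mulVec, dotProduct_sub, dotProduct_add, hstar,
    Matrix.smul_mulVec, Matrix.smul_mulVec, Matrix.one_mulVec, dotProduct_smul, dotProduct_smul,
    hψ, smul_eq_mul, smul_eq_mul, mul_one, Complex.star_def, Complex.add_conj] at hpos
  have h3 : (0 : ℝ) ≤ 2 * (u * (star ψ ⬝ᵥ ((U ^ m) *ᵥ ψ))).re - 2 * c := by
    exact_mod_cast hpos
  linarith

open scoped ComplexOrder in
theorem exists_unit_eigenvector {ι : Type*} [Fintype ι] [DecidableEq ι]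
    {A : Matrix ι ι ℂ} {z : ℂ} (hz : z ∈ spectrum ℂ A) :
    ∃ v : ι → ℂ, star v ⬝ᵥ v = 1 ∧ A *ᵥ v = z • v := by
  rw [spectrum.mem_iff, Matrix.isUnit_iff_isUnit_det, isUnit_iff_ne_zero, not_not,
    ← Matrix.exists_mulVec_eq_zero_iff] at hz
  obtain ⟨v, hv0, hv⟩ := hz
  rw [Matrix.sub_mulVec, Algebra.algebraMap_eq_smul_one, Matrix.smul_mulVec, Matrix.one_mulVec,
    sub_eq_zero] at hv
  obtain ⟨hre, him⟩ := Complex.pos_iff.1 (Matrix.dotProduct_star_self_pos_iff.2 hv0)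
  set r := (star v ⬝ᵥ v).re with hr
  have hvv : star v ⬝ᵥ v = (r : ℂ) := Complex.ext (by simp [hr]) (by simp [← him])
  have hs : (√r : ℂ) * √r = r := by exact_mod_cast Real.mul_self_sqrt hre.le
  have hs0 : (√r : ℂ) ≠ 0 := by exact_mod_cast (Real.sqrt_pos.2 hre).ne'
  refine ⟨(√r : ℂ)⁻¹ • v, ?_, ?_⟩
  · rw [star_smul, smul_dotProduct, dotProduct_smul, hvv, ← hs]
    simp [hs0]
  · rw [Matrix.mulVec_smul, ← hv, smul_comm]

theorem pow_mulVec_eq_of_mulVec_eq {ι R : Type*} [Fintype ι] [DecidableEq ι] [CommRing R]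
    {A : Matrix ι ι R} {z : R} {v : ι → R} (h : A *ᵥ v = z • v) (m : ℕ) :
    (A ^ m) *ᵥ v = z ^ m • v := by
  induction m with
  | zero => simp
  | succ m ih => rw [pow_succ', ← Matrix.mulVec_mulVec, ih, Matrix.mulVec_smul, h, smul_smul,
      pow_succ]

theorem dotProduct_eq_zero_of_unitary_eigenvectors {ι : Type*} [Fintype ι] [DecidableEq ι]
    {U : Matrix ι ι ℂ} (hU : U ∈ Matrix.unitaryGroup ι ℂ) {z w : ℂ} (hz : ‖z‖ = 1)
    (hzw : z ≠ w) {v v' : ι → ℂ} (hv : U *ᵥ v = z • v) (hv' : U *ᵥ v' = w • v') :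
    star v ⬝ᵥ v' = 0 := by
  have h1 : star (U *ᵥ v) ⬝ᵥ (U *ᵥ v') = star v ⬝ᵥ v' := by
    rw [Matrix.star_mulVec, Matrix.dotProduct_mulVec, Matrix.vecMul_vecMul,
      ← Matrix.star_eq_conjTranspose, Matrix.mem_unitaryGroup_iff'.1 hU, Matrix.vecMul_one]
  rw [hv, hv', star_smul, smul_dotProduct, dotProduct_smul, smul_eq_mul, smul_eq_mul] at h1
  by_contra h0
  have h2 : star z * w = 1 := mul_right_cancel₀ h0 (by rw [one_mul, mul_assoc, h1])
  have h3 : z * star z = 1 := by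
    rw [Complex.star_def, Complex.mul_conj, Complex.normSq_eq_norm_sq, hz]; norm_num
  exact hzw (by linear_combination w * h3 - z * h2)

theorem one_sub_normSq_half_exp_add_exp (a b : ℝ) :
    1 - ‖(Complex.exp (Complex.I * a) + Complex.exp (Complex.I * b)) / 2‖ ^ 2 =
      (1 - Real.cos (a - b)) / 2 := by
  rw [Complex.sq_norm, Complex.normSq_apply, Real.cos_sub]
  simp [mul_comm Complex.I, Complex.exp_ofReal_mul_I_re, Complex.exp_ofReal_mul_I_im]
  linear_combination (-1/4) * Real.sin_sq_add_cos_sq a +  (-1/4) * Real.sin_sq_add_cos_sq b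

/-- The balanced superposition of two eigenvectors of a unitary matrix loses fidelity at a rate
set by the phase difference. -/
theorem exists_unit_vector_infidelity {ι : Type*} [Fintype ι] [DecidableEq ι]
    {U : Matrix ι ι ℂ} (hU : U ∈ Matrix.unitaryGroup ι ℂ) {a b : ℝ}
    (ha : Complex.exp (Complex.I * a) ∈ spectrum ℂ U)
    (hb : Complex.exp (Complex.I * b) ∈ spectrum ℂ U)
    (hab : Complex.exp (Complex.I * a) ≠ Complex.exp (Complex.I * b)) :
    ∃ χ : ι → ℂ, star χ ⬝ᵥ χ = 1 ∧ ∀ m : ℕ,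
      1 - ‖star χ ⬝ᵥ ((U ^ m) *ᵥ χ)‖ ^ 2 = (1 - Real.cos (m * (a - b))) / 2 := by
  obtain ⟨v, hv1, hv⟩ := exists_unit_eigenvector ha
  obtain ⟨w, hw1, hw⟩ := exists_unit_eigenvector hb
  have hnorm (x : ℝ) : ‖Complex.exp (Complex.I * x)‖ = 1 := by
    rw [mul_comm]; exact Complex.norm_exp_ofReal_mul_I x
  have hvw := dotProduct_eq_zero_of_unitary_eigenvectors hU (hnorm a) hab hv hw
  have hwv := dotProduct_eq_zero_of_unitary_eigenvectors hU (hnorm b) hab.symm hw hv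
  have hs : (√2 : ℂ)⁻¹ * (√2 : ℂ)⁻¹ = 1 / 2 := by
    rw [← mul_inv, ← Complex.ofReal_mul, Real.mul_self_sqrt (by norm_num)]; norm_num
  have hsum (x y : ℂ) : star ((√2 : ℂ)⁻¹ • (v + w)) ⬝ᵥ ((√2 : ℂ)⁻¹ • (x • v + y • w)) =
      (x + y) / 2 := by
    rw [star_smul, smul_dotProduct, dotProduct_smul, star_add, add_dotProduct, dotProduct_add,
      dotProduct_add]
    simp only [dotProduct_smul, hv1, hw1, hvw, hwv, smul_eq_mul, Complex.star_def, map_inv₀,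
      Complex.conj_ofReal]
    linear_combination (x + y) * hs
  refine ⟨(√2 : ℂ)⁻¹ • (v + w), ?_, fun m => ?_⟩
  · simpa using hsum 1 1
  · rw [Matrix.mulVec_smul, Matrix.mulVec_add, pow_mulVec_eq_of_mulVec_eq hv,
      pow_mulVec_eq_of_mulVec_eq hw, hsum, ← Complex.exp_nat_mul, ← Complex.exp_nat_mul, mul_sub,
      ← one_sub_normSq_half_exp_add_exp]
    push_cast
    ring_nf

theorem recurrence_time_unitary_polytope
    (D d : ℕ) (hd : 2 ≤ d) (U : Matrix (Fin D) (Fin D) ℂ)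
    (hU : U ∈ Matrix.unitaryGroup (Fin D) ℂ)
    (φ : Fin d → ℝ) (hφ : ∀ k, 0 ≤ φ k ∧ φ k < 2 * π)
    (hφinj : Function.Injective φ)
    (hspec : spectrum ℂ U = Set.range (fun k => Complex.exp (Complex.I * φ k)))
    (ε : ℝ) (hε0 : 0 < ε) (hε1 : ε ≤ 1 / 2) :
    ∃ mr : ℕ, 0 < mr ∧
      (mr : ℝ) ≤ (π / ⨆ p : Fin d × Fin d, min |φ p.1 - φ p.2| (2 * π - |φ p.1 - φ p.2|)) *
        (1 / (d : ℝ)) * (2 * ⌈π / ε⌉ + 2 : ℝ) ^ (d - 1) ∧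
      (∀ ψ : Fin D → ℂ, star ψ ⬝ᵥ ψ = 1 →
        1 - ‖star ψ ⬝ᵥ ((U ^ mr) *ᵥ ψ)‖ ^ 2 ≤ ε ^ 2) ∧
      (∃ χ : Fin D → ℂ, star χ ⬝ᵥ χ = 1 ∧ ∃ m' : ℕ, 0 < m' ∧ m' ≤ mr ∧
        1 - ‖star χ ⬝ᵥ ((U ^ m') *ᵥ χ)‖ ^ 2 > ε ^ 2) := by
  obtain ⟨n, rfl⟩ : ∃ n, d = n + 1 := ⟨d - 1, by omega⟩
  have hπ := Real.pi_pos
  set R : Fin (n + 1) × Fin (n + 1) → ℝ :=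
    fun p => min |φ p.1 - φ p.2| (2 * π - |φ p.1 - φ p.2|) with hR
  have hRlt (p : Fin (n + 1) × Fin (n + 1)) : |φ p.1 - φ p.2| < 2 * π := by
    rw [abs_lt]
    constructor <;> linarith [(hφ p.1).1, (hφ p.1).2, (hφ p.2).1, (hφ p.2).2]
  obtain ⟨⟨j, k⟩, hjk⟩ := exists_eq_ciSup_of_finite (f := R)
  set Δ := ⨆ p, R p
  have hΔ0 : 0 < Δ := by
    have hne : (0 : Fin (n + 1)) ≠ ⟨1, by omega⟩ := by simp [Fin.ext_iff]
    refine lt_of_lt_of_le ?_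
      (le_ciSup (Set.finite_range R).bddAbove ((0 : Fin (n + 1)), (⟨1, by omega⟩ : Fin (n + 1))))
    exact lt_min (abs_pos.2 (sub_ne_zero.2 (hφinj.ne hne))) (sub_pos.2 (hRlt _))
  have hΔπ : Δ ≤ π := by
    rw [← hjk]
    have h1 := min_le_left |φ j - φ k| (2 * π - |φ j - φ k|)
    have h2 := min_le_right |φ j - φ k| (2 * π - |φ j - φ k|)
    simp only [hR]
    linarith
  have hcos (M : ℕ) : Real.cos (M * (φ j - φ k)) = Real.cos (M * Δ) := by
    have habs : Real.cos (M * |φ j - φ k|) = Real.cos (M * (φ j - φ k)) := by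
      rw [← Real.cos_abs (M * (φ j - φ k)), abs_mul, Nat.abs_cast]
    rw [← hjk, ← habs]
    rcases min_choice |φ j - φ k| (2 * π - |φ j - φ k|) with h | h
    · simp only [hR, h]
    · simp only [hR, h]
      rw [mul_sub, Real.cos_nat_mul_two_pi_sub]
  have hmem (i) : Complex.exp (Complex.I * φ i) ∈ spectrum ℂ U := hspec ▸ Set.mem_range_self i
  have hexp : Complex.exp (Complex.I * φ j) ≠ Complex.exp (Complex.I * φ k) := by
    intro h
    have h1 := one_sub_normSq_half_exp_add_exp (φ j) (φ k)
    have h2 := hcos 1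
    have h3 := Real.cos_lt_cos_of_nonneg_of_le_pi le_rfl hΔπ hΔ0
    rw [h, add_self_div_two, mul_comm, Complex.norm_exp_ofReal_mul_I] at h1
    rw [Nat.cast_one, one_mul, one_mul] at h2
    rw [Real.cos_zero] at h3
    linarith
  -- the first time at which the largest phase gap exceeds `π / 3`
  obtain ⟨M, hM0, hMl, hMu⟩ : ∃ M : ℕ, 0 < M ∧ π / 3 < M * Δ ∧ M * Δ ≤ π := by
    refine ⟨⌊π / 3 / Δ⌋₊ + 1, Nat.succ_pos _, ?_, ?_⟩
    · rw [← div_lt_iff₀ hΔ0]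
      exact_mod_cast Nat.lt_floor_add_one _
    · rcases lt_or_ge (π / 3) Δ with h | h
      · rw [Nat.floor_eq_zero.2 ((div_lt_one hΔ0).2 h)]
        simpa using hΔπ
      · have := (le_div_iff₀ hΔ0).1 (Nat.floor_le (div_nonneg (by positivity : 0 ≤ π / 3) hΔ0.le))
        push_cast
        linarith
  set q : ℕ := ⌈π / ε⌉₊ + 1 with hq
  have hqπ : π / ε ≤ q := by
    rw [hq]; push_cast; linarith [Nat.le_ceil (π / ε)]
  have hq0 : (0 : ℝ) < q := lt_of_lt_of_le (by positivity) hqπ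
  obtain ⟨m, hm0, hmb, τ, z, hz⟩ := exists_multiple_near_diagonal (b := 2 * q) (by omega)
    (fun i => M * φ i * (q / π))
  have hηε (i) : |m * (M * φ i) - τ * (π / q) - 2 * π * z i| ≤ ε := by
    have h1 : m * (M * φ i) - τ * (π / q) - 2 * π * z i =
        (m * (M * φ i * (q / π)) - τ - (2 * q : ℕ) * z i) * (π / q) := by
      push_cast
      field_simp
    rw [h1, abs_mul, abs_of_pos (by positivity : 0 < π / q)]
    calc _ ≤ 1 * (π / q) := by gcongr; exact hz i
      _ ≤ ε := by
        rw [one_mul, div_le_iff₀ hq0]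
        rwa [div_le_iff₀ hε0, mul_comm] at hqπ
  refine ⟨M * m, Nat.mul_pos hM0 hm0, ?_, fun ψ hψ => ?_, ?_⟩
  · have h1 : (M : ℝ) ≤ π / Δ := (le_div_iff₀ hΔ0).2 hMu
    have h2 : (m : ℝ) * (n + 1 : ℕ) ≤ (2 * q : ℝ) ^ n := by exact_mod_cast hmb
    have h3 : (2 * (⌈π / ε⌉ : ℝ) + 2) = 2 * q := by
      rw [hq, ← natCast_ceil_eq_intCast_ceil (by positivity)]
      push_cast; ring
    have h4 : (m : ℝ) ≤ 1 / (n + 1 : ℕ) * (2 * q : ℝ) ^ n := by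
      rw [one_div, inv_mul_eq_div, le_div_iff₀ (by positivity)]
      exact h2
    rw [h3, mul_assoc, Nat.add_sub_cancel, Nat.cast_mul]
    exact mul_le_mul h1 h4 (by positivity) (by positivity)
  · set u : ℂ := Complex.exp (-(Complex.I * (τ * (π / q) : ℝ))) with hu
    have hcosε : 0 ≤ Real.cos ε :=
      Real.cos_nonneg_of_mem_Icc ⟨by linarith, by linarith [Real.pi_gt_three]⟩
    have h1 : Real.cos ε ≤ (u * (star ψ ⬝ᵥ ((U ^ (M * m)) *ᵥ ψ))).re := by
      refine le_re_mul_dotProduct_pow_mulVec hU (fun x hx => ?_) hψ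
      rw [hspec] at hx
      obtain ⟨i, rfl⟩ := hx
      have h2 : u * Complex.exp (Complex.I * φ i) ^ (M * m) =
          Complex.exp ((m * (M * φ i) - τ * (π / q) - 2 * π * z i : ℝ) * Complex.I) := by
        rw [hu, ← Complex.exp_nat_mul, ← Complex.exp_add, Complex.exp_eq_exp_iff_exists_int]
        exact ⟨z i, by push_cast; ring⟩
      simp only [h2, Complex.exp_ofReal_mul_I_re]
      rw [← Real.cos_abs (_ - _)]
      exact Real.cos_le_cos_of_nonneg_of_le_pi (abs_nonneg _)
        (by linarith [Real.pi_gt_three]) (hηε i)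
    have h2 : ‖u‖ = 1 := by
      rw [hu, Complex.norm_exp]; simp
    have h3 : Real.cos ε ≤ ‖star ψ ⬝ᵥ ((U ^ (M * m)) *ᵥ ψ)‖ := by
      refine (h1.trans (Complex.re_le_norm _)).trans ?_
      rw [norm_mul, h2, one_mul]
    have h4 := pow_le_pow_left₀ hcosε h3 2
    have h5 := pow_le_pow_left₀ (Real.sin_nonneg_of_nonneg_of_le_pi hε0.le
      (by linarith [Real.pi_gt_three])) (Real.sin_le hε0.le) 2
    linarith [Real.sin_sq_add_cos_sq ε]
  · obtain ⟨χ, hχ, hχm⟩ := exists_unit_vector_infidelity hU (hmem j) (hmem k) hexp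
    refine ⟨χ, hχ, M, hM0, Nat.le_mul_of_pos_right M hm0, ?_⟩
    have h1 := Real.cos_lt_cos_of_nonneg_of_le_pi (by positivity) hMu hMl
    rw [Real.cos_pi_div_three] at h1
    rw [hχm, hcos]
    nlinarith
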